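/- arXiv:1808.02762 — 2 statements merged into one kernel-verified Lean document; each statement's English description precedes it below -/
import Mathlib

section
/- Let 1 < q < 2 < p and V0 > 0. Then there exists Λ0 > 0 with the following three properties. (1) For each λ ∈ (0, Λ0) there exist real numbers 0 < r₁ < r₂ such that for every r > 0: r ∈ [r₁, r₂] if and only if r^{p−1} + λ r^{q−1} ≤ V0·r. (2) For λ = Λ0 there exists exactly one r > 0 such that r^{p−1} + Λ0·r^{q−1} = V0·r. (3) For every λ > Λ0 there is no r > 0 such that r^{p−1} + λ r^{q−1} = V0·r. -/
/-!
Dividing `r ^ γ + lam * r ^ α ≤ V * r ^ β` by `r ^ α` isolates `lam`: the inequality says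
`lam ≤ V * r ^ (β - α) - r ^ (γ - α)`. For `α < β < γ` and `0 < V` the right-hand side vanishes
at `0`, increases strictly up to a single critical point, and then decreases strictly to `-∞`. Its
maximum is the threshold, and its superlevel sets at positive heights below the maximum are the
intervals `[r₁, r₂]`.
-/

open Set Filter

section Unimodal

variable {X Y : Type*} [LinearOrder X] [Preorder Y] {f : X → Y} {a m x : X} {y : Y}

theorem lt_of_strictMonoOn_Icc_of_strictAntiOn_Ici (hmono : StrictMonoOn f (Icc a m))
    (hanti : StrictAntiOn f (Ici m)) (hax : a ≤ x) (hxm : x ≠ m) : f x < f m := by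
  rcases hxm.lt_or_gt with hlt | hgt
  · exact hmono ⟨hax, hlt.le⟩ ⟨hax.trans hlt.le, le_rfl⟩ hlt
  · exact hanti self_mem_Ici hgt.le hgt

theorem mem_Icc_iff_le_of_strictMonoOn_of_strictAntiOn {r₁ r₂ : X}
    (hmono : StrictMonoOn f (Icc a m)) (hanti : StrictAntiOn f (Ici m))
    (hr₁ : r₁ ∈ Icc a m) (hr₂ : r₂ ∈ Ici m) (hfr₁ : f r₁ = y) (hfr₂ : f r₂ = y) (hax : a ≤ x) :
    x ∈ Icc r₁ r₂ ↔ y ≤ f x := by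
  rcases le_total x m with hxm | hmx
  · rw [← hfr₁, hmono.le_iff_le hr₁ ⟨hax, hxm⟩, mem_Icc, and_iff_left (hxm.trans hr₂)]
  · rw [← hfr₂, hanti.le_iff_ge hr₂ hmx, mem_Icc, and_iff_right (hr₁.2.trans hmx)]

end Unimodal

theorem exists_forall_mem_Icc_iff_le_of_strictMonoOn_of_strictAntiOn {X Y : Type*}
    [ConditionallyCompleteLinearOrder X] [DenselyOrdered X] [TopologicalSpace X] [OrderTopology X]
    [LinearOrder Y] [TopologicalSpace Y] [OrderClosedTopology Y] {f : X → Y} {a b m : X} {y : Y}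
    (hcont : ContinuousOn f (Icc a b)) (hmono : StrictMonoOn f (Icc a m))
    (hanti : StrictAntiOn f (Ici m)) (hm : m ∈ Icc a b) (hay : f a < y) (hym : y < f m)
    (hby : f b ≤ y) :
    ∃ r₁ r₂, a < r₁ ∧ r₁ < r₂ ∧ ∀ x, a ≤ x → (x ∈ Icc r₁ r₂ ↔ y ≤ f x) := by
  obtain ⟨r₁, hr₁, hfr₁⟩ :=
    intermediate_value_Ioo hm.1 (hcont.mono (Icc_subset_Icc_right hm.2)) ⟨hay, hym⟩
  obtain ⟨r₂, hr₂, hfr₂⟩ :=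
    intermediate_value_Icc' hm.2 (hcont.mono (Icc_subset_Icc_left hm.1)) ⟨hby, hym.le⟩
  exact ⟨r₁, r₂, hr₁.1, hr₁.2.trans_le hr₂.1, fun x hax ↦
    mem_Icc_iff_le_of_strictMonoOn_of_strictAntiOn hmono hanti (Ioo_subset_Icc_self hr₁) hr₂.1
      hfr₁ hfr₂ hax⟩

/-- The difference of powers `V * r ^ a - r ^ b`; with `a = β - α` and `b = γ - α` it is the value
of `lam` for which `r ^ γ + lam * r ^ α = V * r ^ β`. -/
noncomputable def rpowGap (V a b r : ℝ) : ℝ := V * r ^ a - r ^ b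

/-- The point at which `rpowGap V a b` is maximal when `0 < a < b` and `0 < V`, obtained by solving
`a * V * r ^ (a - 1) = b * r ^ (b - 1)`. -/
noncomputable def rpowGapArgmax (V a b : ℝ) : ℝ := (a * V / b) ^ (b - a)⁻¹

section RpowGap

variable {V a b r : ℝ}

theorem rpowGap_zero (ha : a ≠ 0) (hb : b ≠ 0) : rpowGap V a b 0 = 0 := by
  simp [rpowGap, Real.zero_rpow ha, Real.zero_rpow hb]

theorem continuous_rpowGap (ha : 0 ≤ a) (hb : 0 ≤ b) : Continuous (rpowGap V a b) :=
  ((Real.continuous_rpow_const ha).const_mul V).sub (Real.continuous_rpow_const hb)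

theorem rpowGap_eq_rpow_mul (hr : 0 < r) : rpowGap V a b r = r ^ a * (V - r ^ (b - a)) := by
  rw [mul_sub, ← Real.rpow_add hr, add_sub_cancel, mul_comm, rpowGap]

theorem tendsto_rpowGap_atTop_atBot (ha : 0 < a) (hab : a < b) :
    Tendsto (rpowGap V a b) atTop atBot := by
  have hfactor : Tendsto (fun r : ℝ ↦ V - r ^ (b - a)) atTop atBot :=
    tendsto_const_nhds.add_atBot (tendsto_neg_atTop_atBot.comp (tendsto_rpow_atTop (sub_pos.2 hab)))
  refine ((tendsto_rpow_atTop ha).atTop_mul_atBot₀ hfactor).congr' ?_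
  filter_upwards [eventually_gt_atTop 0] with r hr using (rpowGap_eq_rpow_mul hr).symm

theorem deriv_rpowGap (hr : 0 < r) :
    deriv (rpowGap V a b) r = r ^ (a - 1) * (a * V - b * r ^ (b - a)) := by
  have hderiv : HasDerivAt (rpowGap V a b) (V * (a * r ^ (a - 1)) - b * r ^ (b - 1)) r :=
    ((Real.hasDerivAt_rpow_const (.inl hr.ne')).const_mul V).sub
      (Real.hasDerivAt_rpow_const (.inl hr.ne'))
  have hpow : r ^ (b - 1) = r ^ (a - 1) * r ^ (b - a) := by
    rw [← Real.rpow_add hr]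
    ring_nf
  rw [hderiv.deriv, hpow]
  ring

theorem rpowGapArgmax_pos (hV : 0 < V) (ha : 0 < a) (hb : 0 < b) : 0 < rpowGapArgmax V a b :=
  Real.rpow_pos_of_pos (by positivity) _

theorem lt_rpowGapArgmax_iff (hV : 0 ≤ V) (ha : 0 < a) (hab : a < b) (hr : 0 ≤ r) :
    r < rpowGapArgmax V a b ↔ b * r ^ (b - a) < a * V := by
  have hb : 0 < b := ha.trans hab
  rw [rpowGapArgmax, Real.lt_rpow_inv_iff_of_pos hr (by positivity) (sub_pos.2 hab),
    lt_div_iff₀' hb]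

theorem rpowGapArgmax_lt_iff (hV : 0 ≤ V) (ha : 0 < a) (hab : a < b) (hr : 0 ≤ r) :
    rpowGapArgmax V a b < r ↔ a * V < b * r ^ (b - a) := by
  have hb : 0 < b := ha.trans hab
  rw [rpowGapArgmax, Real.rpow_inv_lt_iff_of_pos (by positivity) hr (sub_pos.2 hab),
    div_lt_iff₀' hb]

theorem strictMonoOn_rpowGap (hV : 0 ≤ V) (ha : 0 < a) (hab : a < b) :
    StrictMonoOn (rpowGap V a b) (Icc 0 (rpowGapArgmax V a b)) := by
  refine strictMonoOn_of_deriv_pos (convex_Icc _ _)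
    (continuous_rpowGap ha.le (ha.trans hab).le).continuousOn fun r hr ↦ ?_
  rw [interior_Icc] at hr
  rw [deriv_rpowGap hr.1]
  exact mul_pos (Real.rpow_pos_of_pos hr.1 _)
    (sub_pos.2 ((lt_rpowGapArgmax_iff hV ha hab hr.1.le).1 hr.2))

theorem strictAntiOn_rpowGap (hV : 0 < V) (ha : 0 < a) (hab : a < b) :
    StrictAntiOn (rpowGap V a b) (Ici (rpowGapArgmax V a b)) := by
  refine strictAntiOn_of_deriv_neg (convex_Ici _)
    (continuous_rpowGap ha.le (ha.trans hab).le).continuousOn fun r hr ↦ ?_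
  rw [interior_Ici] at hr
  have hr₀ : 0 < r := (rpowGapArgmax_pos hV ha (ha.trans hab)).trans hr
  rw [deriv_rpowGap hr₀]
  exact mul_neg_of_pos_of_neg (Real.rpow_pos_of_pos hr₀ _)
    (sub_neg.2 ((rpowGapArgmax_lt_iff hV.le ha hab hr₀.le).1 hr))

theorem rpowGap_lt_rpowGap_rpowGapArgmax (hV : 0 < V) (ha : 0 < a) (hab : a < b) (hr : 0 ≤ r)
    (hne : r ≠ rpowGapArgmax V a b) :
    rpowGap V a b r < rpowGap V a b (rpowGapArgmax V a b) :=
  lt_of_strictMonoOn_Icc_of_strictAntiOn_Ici (strictMonoOn_rpowGap hV.le ha hab)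
    (strictAntiOn_rpowGap hV ha hab) hr hne

theorem rpowGap_rpowGapArgmax_pos (hV : 0 < V) (ha : 0 < a) (hab : a < b) :
    0 < rpowGap V a b (rpowGapArgmax V a b) := by
  have hb : 0 < b := ha.trans hab
  simpa only [rpowGap_zero ha.ne' hb.ne'] using
    rpowGap_lt_rpowGap_rpowGapArgmax hV ha hab le_rfl (rpowGapArgmax_pos hV ha hb).ne

theorem exists_forall_mem_Icc_iff_le_rpowGap (hV : 0 < V) (ha : 0 < a) (hab : a < b) {lam : ℝ}
    (hlam : 0 < lam) (hlam_lt : lam < rpowGap V a b (rpowGapArgmax V a b)) :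
    ∃ r₁ r₂, 0 < r₁ ∧ r₁ < r₂ ∧ ∀ r, 0 ≤ r → (r ∈ Icc r₁ r₂ ↔ lam ≤ rpowGap V a b r) := by
  have hb : 0 < b := ha.trans hab
  obtain ⟨R, hR_le, hR_ge⟩ := (((tendsto_rpowGap_atTop_atBot ha hab).eventually_le_atBot lam).and
    (eventually_ge_atTop (rpowGapArgmax V a b))).exists
  exact exists_forall_mem_Icc_iff_le_of_strictMonoOn_of_strictAntiOn
    (continuous_rpowGap ha.le hb.le).continuousOn (strictMonoOn_rpowGap hV.le ha hab)
    (strictAntiOn_rpowGap hV ha hab) ⟨(rpowGapArgmax_pos hV ha hb).le, hR_ge⟩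
    (by rwa [rpowGap_zero ha.ne' hb.ne']) hlam_lt hR_le

end RpowGap

section Threshold

variable {α β γ V lam r : ℝ}

theorem mul_rpow_sub_eq_rpow_mul_rpowGap_sub (hr : 0 < r) :
    V * r ^ β - (r ^ γ + lam * r ^ α) = r ^ α * (rpowGap V (β - α) (γ - α) r - lam) := by
  have hβ : r ^ β = r ^ α * r ^ (β - α) := by rw [← Real.rpow_add hr, add_sub_cancel]
  have hγ : r ^ γ = r ^ α * r ^ (γ - α) := by rw [← Real.rpow_add hr, add_sub_cancel]
  rw [rpowGap, hβ, hγ]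
  ring

theorem rpow_add_mul_rpow_le_iff (hr : 0 < r) :
    r ^ γ + lam * r ^ α ≤ V * r ^ β ↔ lam ≤ rpowGap V (β - α) (γ - α) r := by
  rw [← sub_nonneg, mul_rpow_sub_eq_rpow_mul_rpowGap_sub hr,
    mul_nonneg_iff_of_pos_left (Real.rpow_pos_of_pos hr α), sub_nonneg]

theorem rpow_add_mul_rpow_eq_iff (hr : 0 < r) :
    r ^ γ + lam * r ^ α = V * r ^ β ↔ rpowGap V (β - α) (γ - α) r = lam := by
  rw [eq_comm, ← sub_eq_zero, mul_rpow_sub_eq_rpow_mul_rpowGap_sub hr,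
    mul_eq_zero_iff_left (Real.rpow_pos_of_pos hr α).ne', sub_eq_zero]

theorem statement4_general (hαβ : α < β) (hβγ : β < γ) (hV : 0 < V) :
    ∃ Λ0 : ℝ, 0 < Λ0 ∧
      (∀ lam : ℝ, 0 < lam → lam < Λ0 →
        ∃ r₁ r₂ : ℝ, 0 < r₁ ∧ r₁ < r₂ ∧
          ∀ r : ℝ, 0 < r → (r ∈ Icc r₁ r₂ ↔ r ^ γ + lam * r ^ α ≤ V * r ^ β)) ∧
      (∃! r : ℝ, 0 < r ∧ r ^ γ + Λ0 * r ^ α = V * r ^ β) ∧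
      (∀ lam : ℝ, Λ0 < lam → ¬ ∃ r : ℝ, 0 < r ∧ r ^ γ + lam * r ^ α = V * r ^ β) := by
  have ha : 0 < β - α := sub_pos.2 hαβ
  have hab : β - α < γ - α := sub_lt_sub_right hβγ α
  have hlt_max {r : ℝ} (hr : 0 < r) := rpowGap_lt_rpowGap_rpowGapArgmax hV ha hab hr.le
  have hm : 0 < rpowGapArgmax V (β - α) (γ - α) := rpowGapArgmax_pos hV ha (ha.trans hab)
  refine ⟨_, rpowGap_rpowGapArgmax_pos hV ha hab, fun lam hlam hlam_lt ↦ ?_,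
    ⟨_, ⟨hm, (rpow_add_mul_rpow_eq_iff hm).2 rfl⟩, ?_⟩, ?_⟩
  · obtain ⟨r₁, r₂, hr₁, hr₁₂, hmem⟩ :=
      exists_forall_mem_Icc_iff_le_rpowGap hV ha hab hlam hlam_lt
    exact ⟨r₁, r₂, hr₁, hr₁₂, fun r hr ↦ (hmem r hr.le).trans (rpow_add_mul_rpow_le_iff hr).symm⟩
  · rintro r ⟨hr, heq⟩
    exact of_not_not fun hne ↦ (hlt_max hr hne).ne ((rpow_add_mul_rpow_eq_iff hr).1 heq)
  · rintro lam hlam ⟨r, hr, heq⟩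
    rw [← (rpow_add_mul_rpow_eq_iff hr).1 heq] at hlam
    exact lt_asymm hlam (hlt_max hr (ne_of_apply_ne _ hlam.ne'))

end Threshold

/-- Lemma 4.1: behaviour of the inequality `r^(p−1) + λ r^(q−1) ≤ V0 r` for
`1 < q < 2 < p` and `V0 > 0`, as `λ > 0` varies around a threshold `Λ0`. -/
theorem statement4 (p q V0 : ℝ) (hq1 : 1 < q) (hq2 : q < 2) (hp : 2 < p) (hV0 : 0 < V0) :
    ∃ Λ0 : ℝ, 0 < Λ0 ∧
      (∀ lam : ℝ, 0 < lam → lam < Λ0 →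
        ∃ r₁ r₂ : ℝ, 0 < r₁ ∧ r₁ < r₂ ∧
          ∀ r : ℝ, 0 < r →
            (r ∈ Set.Icc r₁ r₂ ↔ r ^ (p - 1) + lam * r ^ (q - 1) ≤ V0 * r)) ∧
      (∃! r : ℝ, 0 < r ∧ r ^ (p - 1) + Λ0 * r ^ (q - 1) = V0 * r) ∧
      (∀ lam : ℝ, Λ0 < lam →
        ¬ ∃ r : ℝ, 0 < r ∧ r ^ (p - 1) + lam * r ^ (q - 1) = V0 * r) := by
  simpa only [Real.rpow_one] using
    statement4_general (by linarith : q - 1 < 1) (by linarith : 1 < p - 1) hV0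
end

section
/- Let V : ℝ^N → ℝ be measurable with V(x) > 0 for a.e. x and with x ↦ 1/V(x) Lebesgue integrable on ℝ^N. Let u₀ and u_n (n ∈ ℕ) be measurable functions ℝ^N → ℝ such that sup_n ∫ V(x)(u_n(x) − u₀(x))² dx < ∞ and, for every R > 0, ∫_{|x| ≤ R} |u_n(x) − u₀(x)| dx → 0 as n → ∞. Then ∫_{ℝ^N} |u_n(x) − u₀(x)| dx → 0 as n → ∞. -/
open MeasureTheory Filter Topology

/-!
Hölder's inequality applied to `‖f‖ = (w ^ p⁻¹ * ‖f‖) * w ^ (-p⁻¹)` bounds the `L¹` mass of `f` on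
a set by its weighted `Lᵖ` norm times a power of the mass of the dual weight `w ^ (1 - q)` on that
set. Since the dual weight is integrable, its mass outside large sets vanishes, so the integrals of
`‖f n‖` over an exhaustion converge to the full integrals uniformly in `n`; this uniformity permits
interchanging the limit in `n` with the limit along the exhaustion.
-/

section WeightedHolder

variable {α E : Type*} [MeasurableSpace α] {μ : Measure α} [NormedAddCommGroup E]
  {p q : ℝ} {w : α → ℝ} {f : α → E}

theorem memLp_ofReal_of_integrable_rpow {g : α → ℝ} (hp : 0 < p)
    (hg : AEStronglyMeasurable g μ) (hg_nonneg : 0 ≤ᵐ[μ] g)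
    (hint : Integrable (fun x => g x ^ p) μ) : MemLp g (ENNReal.ofReal p) μ := by
  rw [← integrable_norm_rpow_iff hg (by simpa using hp) ENNReal.ofReal_ne_top,
    ENNReal.toReal_ofReal hp.le]
  refine hint.congr ?_
  filter_upwards [hg_nonneg] with x hx
  rw [Real.norm_of_nonneg hx]

theorem rpow_inv_mul_rpow {v a : ℝ} (hp : p ≠ 0) (hv : 0 ≤ v) (ha : 0 ≤ a) :
    (v ^ p⁻¹ * a) ^ p = v * a ^ p := by
  rw [Real.mul_rpow (Real.rpow_nonneg hv _) ha, Real.rpow_inv_rpow hv hp]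

theorem rpow_neg_inv_rpow_conjugate (hpq : p.HolderConjugate q) {v : ℝ} (hv : 0 ≤ v) :
    (v ^ (-p⁻¹)) ^ q = v ^ (1 - q) := by
  rw [← Real.rpow_mul hv, neg_mul, ← div_eq_inv_mul, hpq.symm.div_conj_eq_sub_one, neg_sub]

theorem rpow_inv_mul_mul_rpow_neg_inv {v : ℝ} (hv : 0 < v) (a : ℝ) :
    v ^ p⁻¹ * a * v ^ (-p⁻¹) = a := by
  rw [mul_right_comm, ← Real.rpow_add hv, add_neg_cancel, Real.rpow_zero, one_mul]

theorem rpow_one_sub_two (v : ℝ) : v ^ (1 - 2 : ℝ) = 1 / v := by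
  rw [show (1 - 2 : ℝ) = -1 by norm_num, Real.rpow_neg_one, one_div]

theorem memLp_weight_rpow_inv_mul_norm (hp : 0 < p) (hw : AEMeasurable w μ)
    (hw_nonneg : 0 ≤ᵐ[μ] w) (hf : AEStronglyMeasurable f μ)
    (hint : Integrable (fun x => w x * ‖f x‖ ^ p) μ) :
    MemLp (fun x => w x ^ p⁻¹ * ‖f x‖) (ENNReal.ofReal p) μ := by
  refine memLp_ofReal_of_integrable_rpow hp
    ((hw.pow_const _).aestronglyMeasurable.mul hf.norm) ?_ (hint.congr ?_)
  · filter_upwards [hw_nonneg] with x hx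
    exact mul_nonneg (Real.rpow_nonneg hx _) (norm_nonneg _)
  · filter_upwards [hw_nonneg] with x hx
    exact (rpow_inv_mul_rpow hp.ne' hx (norm_nonneg _)).symm

theorem memLp_weight_rpow_neg_inv (hpq : p.HolderConjugate q) (hw : AEMeasurable w μ)
    (hw_nonneg : 0 ≤ᵐ[μ] w) (hint : Integrable (fun x => w x ^ (1 - q)) μ) :
    MemLp (fun x => w x ^ (-p⁻¹)) (ENNReal.ofReal q) μ := by
  refine memLp_ofReal_of_integrable_rpow hpq.symm.pos
    (hw.pow_const _).aestronglyMeasurable ?_ (hint.congr ?_)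
  · filter_upwards [hw_nonneg] with x hx
    exact Real.rpow_nonneg hx _
  · filter_upwards [hw_nonneg] with x hx
    exact (rpow_neg_inv_rpow_conjugate hpq hx).symm

theorem integrable_of_integrable_weight_mul_norm_rpow (hpq : p.HolderConjugate q)
    (hw : AEMeasurable w μ) (hw_pos : ∀ᵐ x ∂μ, 0 < w x)
    (hw_dual : Integrable (fun x => w x ^ (1 - q)) μ) (hf : AEStronglyMeasurable f μ)
    (hint : Integrable (fun x => w x * ‖f x‖ ^ p) μ) : Integrable f μ := by
  have hw_nonneg : 0 ≤ᵐ[μ] w := hw_pos.mono fun _ hx => hx.le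
  have : (ENNReal.ofReal p).HolderConjugate (ENNReal.ofReal q) := hpq.ennrealOfReal
  rw [← integrable_norm_iff hf]
  refine ((memLp_weight_rpow_inv_mul_norm hpq.pos hw hw_nonneg hf hint).integrable_mul
    (memLp_weight_rpow_neg_inv hpq hw hw_nonneg hw_dual)).congr ?_
  filter_upwards [hw_pos] with x hx
  exact rpow_inv_mul_mul_rpow_neg_inv hx _

theorem integral_norm_le_weighted_Lp_mul_dual_weight (hpq : p.HolderConjugate q)
    (hw : AEMeasurable w μ) (hw_pos : ∀ᵐ x ∂μ, 0 < w x)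
    (hw_dual : Integrable (fun x => w x ^ (1 - q)) μ) (hf : AEStronglyMeasurable f μ)
    (hint : Integrable (fun x => w x * ‖f x‖ ^ p) μ) :
    ∫ x, ‖f x‖ ∂μ ≤
      (∫ x, w x * ‖f x‖ ^ p ∂μ) ^ (1 / p) * (∫ x, w x ^ (1 - q) ∂μ) ^ (1 / q) := by
  have hw_nonneg : 0 ≤ᵐ[μ] w := hw_pos.mono fun _ hx => hx.le
  calc ∫ x, ‖f x‖ ∂μ
      = ∫ x, w x ^ p⁻¹ * ‖f x‖ * w x ^ (-p⁻¹) ∂μ := by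
        refine integral_congr_ae (hw_pos.mono fun x hx => ?_)
        exact (rpow_inv_mul_mul_rpow_neg_inv hx _).symm
    _ ≤ (∫ x, (w x ^ p⁻¹ * ‖f x‖) ^ p ∂μ) ^ (1 / p) *
          (∫ x, (w x ^ (-p⁻¹)) ^ q ∂μ) ^ (1 / q) :=
        integral_mul_le_Lp_mul_Lq_of_nonneg hpq
          (hw_nonneg.mono fun x hx => mul_nonneg (Real.rpow_nonneg hx _) (norm_nonneg _))
          (hw_nonneg.mono fun x hx => Real.rpow_nonneg hx _)
          (memLp_weight_rpow_inv_mul_norm hpq.pos hw hw_nonneg hf hint)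
          (memLp_weight_rpow_neg_inv hpq hw hw_nonneg hw_dual)
    _ = (∫ x, w x * ‖f x‖ ^ p ∂μ) ^ (1 / p) * (∫ x, w x ^ (1 - q) ∂μ) ^ (1 / q) := by
        congr 2
        · exact integral_congr_ae <| hw_nonneg.mono fun x hx =>
            rpow_inv_mul_rpow hpq.ne_zero hx (norm_nonneg _)
        · exact integral_congr_ae <| hw_nonneg.mono fun x hx =>
            rpow_neg_inv_rpow_conjugate hpq hx

theorem setIntegral_norm_le_of_weighted_Lp_le (hpq : p.HolderConjugate q)
    (hw : AEMeasurable w μ) (hw_pos : ∀ᵐ x ∂μ, 0 < w x)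
    (hw_dual : Integrable (fun x => w x ^ (1 - q)) μ) (hf : AEStronglyMeasurable f μ)
    (hint : Integrable (fun x => w x * ‖f x‖ ^ p) μ) {C : ℝ}
    (hC : ∫ x, w x * ‖f x‖ ^ p ∂μ ≤ C) (t : Set α) :
    ∫ x in t, ‖f x‖ ∂μ ≤ C ^ (1 / p) * (∫ x in t, w x ^ (1 - q) ∂μ) ^ (1 / q) := by
  have hweighted_nonneg : 0 ≤ᵐ[μ] fun x => w x * ‖f x‖ ^ p :=
    hw_pos.mono fun x hx => mul_nonneg hx.le (Real.rpow_nonneg (norm_nonneg _) _)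
  have hdual_nonneg : 0 ≤ᵐ[μ] fun x => w x ^ (1 - q) :=
    hw_pos.mono fun x hx => Real.rpow_nonneg hx.le _
  have hset_le : ∫ x in t, w x * ‖f x‖ ^ p ∂μ ≤ C :=
    (setIntegral_le_integral hint hweighted_nonneg).trans hC
  calc ∫ x in t, ‖f x‖ ∂μ
      ≤ (∫ x in t, w x * ‖f x‖ ^ p ∂μ) ^ (1 / p) * (∫ x in t, w x ^ (1 - q) ∂μ) ^ (1 / q) :=
        integral_norm_le_weighted_Lp_mul_dual_weight hpq hw.restrict (ae_restrict_of_ae hw_pos)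
          hw_dual.restrict hf.restrict hint.restrict
    _ ≤ C ^ (1 / p) * (∫ x in t, w x ^ (1 - q) ∂μ) ^ (1 / q) :=
        mul_le_mul_of_nonneg_right
          (Real.rpow_le_rpow (integral_nonneg_of_ae (ae_restrict_of_ae hweighted_nonneg)) hset_le
            hpq.one_div_nonneg)
          (Real.rpow_nonneg (integral_nonneg_of_ae (ae_restrict_of_ae hdual_nonneg)) _)

end WeightedHolder

section Exhaustion

variable {α κ E : Type*} [MeasurableSpace α] {μ : Measure α} [NormedAddCommGroup E]
  [NormedSpace ℝ E] {L : Filter κ} {s : κ → Set α}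

theorem tendsto_setIntegral_compl_of_aecover [L.IsCountablyGenerated] (hs : AECover μ L s)
    {f : α → E} (hf : Integrable f μ) :
    Tendsto (fun k => ∫ x in (s k)ᶜ, f x ∂μ) L (𝓝 0) := by
  have h := (hs.integral_tendsto_of_countably_generated hf).const_sub (∫ x, f x ∂μ)
  simpa only [setIntegral_compl (hs.measurableSet _) hf, sub_self] using h

theorem tendstoUniformly_setIntegral_of_norm_compl_le {ι : Type*} {f : ι → α → E} {τ : κ → ℝ}
    (hs : ∀ k, MeasurableSet (s k)) (hf : ∀ n, Integrable (f n) μ)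
    (hτ : Tendsto τ L (𝓝 0)) (htail : ∀ k n, ∫ x in (s k)ᶜ, ‖f n x‖ ∂μ ≤ τ k) :
    TendstoUniformly (fun k n => ∫ x in s k, f n x ∂μ) (fun n => ∫ x, f n x ∂μ) L := by
  rw [Metric.tendstoUniformly_iff]
  intro ε hε
  filter_upwards [hτ.eventually_lt_const hε] with k hk n
  calc dist (∫ x, f n x ∂μ) (∫ x in s k, f n x ∂μ)
      = ‖∫ x in (s k)ᶜ, f n x ∂μ‖ := by rw [dist_eq_norm, setIntegral_compl (hs k) (hf n)]
    _ ≤ ∫ x in (s k)ᶜ, ‖f n x‖ ∂μ := norm_integral_le_integral_norm _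
    _ ≤ τ k := htail k n
    _ < ε := hk

theorem aecover_setOf_norm_le {F : Type*} [SeminormedAddCommGroup F] [MeasurableSpace F]
    [OpensMeasurableSpace F] {ν : Measure F} :
    AECover ν atTop fun R : ℝ => {y : F | ‖y‖ ≤ R} := by
  simpa only [Metric.closedBall, dist_zero_right] using
    aecover_closedBall (μ := ν) (x := (0 : F)) (r := fun R : ℝ => R) tendsto_id

end Exhaustion

theorem statement12_general {α ι κ E : Type*} [MeasurableSpace α] {μ : Measure α}
    [NormedAddCommGroup E] {l : Filter ι} {L : Filter κ} [L.NeBot] [L.IsCountablyGenerated]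
    {p q : ℝ} (hpq : p.HolderConjugate q) {s : κ → Set α} (hs : AECover μ L s)
    {w : α → ℝ} (hw : AEMeasurable w μ) (hw_pos : ∀ᵐ x ∂μ, 0 < w x)
    (hw_dual : Integrable (fun x => w x ^ (1 - q)) μ)
    {f : ι → α → E} (hf : ∀ n, AEStronglyMeasurable (f n) μ) {C : ℝ}
    (hbound : ∀ n, Integrable (fun x => w x * ‖f n x‖ ^ p) μ ∧
      ∫ x, w x * ‖f n x‖ ^ p ∂μ ≤ C)
    (hloc : ∀ᶠ k in L, Tendsto (fun n => ∫ x in s k, ‖f n x‖ ∂μ) l (𝓝 0)) :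
    (∀ n, Integrable (f n) μ) ∧ Tendsto (fun n => ∫ x, ‖f n x‖ ∂μ) l (𝓝 0) := by
  have hint (n : ι) : Integrable (f n) μ :=
    integrable_of_integrable_weight_mul_norm_rpow hpq hw hw_pos hw_dual (hf n) (hbound n).1
  have hdual_tail : Tendsto (fun k => C ^ (1 / p) * (∫ x in (s k)ᶜ, w x ^ (1 - q) ∂μ) ^ (1 / q))
      L (𝓝 0) := by
    simpa only [Real.zero_rpow hpq.symm.one_div_ne_zero, mul_zero] using
      ((tendsto_setIntegral_compl_of_aecover hs hw_dual).rpow_const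
        (.inr hpq.symm.one_div_nonneg)).const_mul (C ^ (1 / p))
  have htail (k : κ) (n : ι) : ∫ x in (s k)ᶜ, ‖f n x‖ ∂μ ≤
      C ^ (1 / p) * (∫ x in (s k)ᶜ, w x ^ (1 - q) ∂μ) ^ (1 / q) :=
    setIntegral_norm_le_of_weighted_Lp_le hpq hw hw_pos hw_dual (hf n) (hbound n).1 (hbound n).2 _
  have huniform : TendstoUniformly (fun k n => ∫ x in s k, ‖f n x‖ ∂μ)
      (fun n => ∫ x, ‖f n x‖ ∂μ) L :=
    tendstoUniformly_setIntegral_of_norm_compl_le hs.measurableSet (fun n => (hint n).norm)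
      hdual_tail (by simpa only [norm_norm] using htail)
  exact ⟨hint, huniform.tendsto_of_eventually_tendsto hloc tendsto_const_nhds⟩

/-- The tail-cutting argument from the proof of Lemma 3.1: uniform boundedness of
`∫ V (u_n − u₀)²` together with integrability of `1/V` upgrades local
L¹-convergence to global L¹-convergence. -/
theorem statement12 (N : ℕ) (V : EuclideanSpace ℝ (Fin N) → ℝ)
    (u₀ : EuclideanSpace ℝ (Fin N) → ℝ)
    (u : ℕ → EuclideanSpace ℝ (Fin N) → ℝ)
    (hV : AEMeasurable V volume) (hVpos : ∀ᵐ x ∂volume, 0 < V x)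
    (hVinv : Integrable (fun x => 1 / V x) volume)
    (hu : ∀ n, AEMeasurable (u n) volume) (hu₀ : AEMeasurable u₀ volume)
    (C : ℝ)
    (hbound : ∀ n, Integrable (fun x => V x * (u n x - u₀ x) ^ 2) volume ∧
      ∫ x, V x * (u n x - u₀ x) ^ 2 ≤ C)
    (hloc : ∀ R : ℝ, 0 < R →
      Tendsto (fun n => ∫ x in {y : EuclideanSpace ℝ (Fin N) | ‖y‖ ≤ R},
        |u n x - u₀ x|) atTop (𝓝 0)) :
    (∀ n, Integrable (fun x => u n x - u₀ x) volume) ∧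
      Tendsto (fun n => ∫ x, |u n x - u₀ x|) atTop (𝓝 0) :=
  statement12_general .two_two aecover_setOf_norm_le hV hVpos
    (by simpa only [rpow_one_sub_two] using hVinv)
    (fun n => ((hu n).sub hu₀).aestronglyMeasurable)
    (by simpa only [Pi.sub_apply, Real.norm_eq_abs, Real.rpow_two, sq_abs] using hbound)
    ((eventually_gt_atTop 0).mono hloc)
end
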